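/- Let 1 < p < ∞, let k ≥ 1 be a natural number, let 0 < λ ≤ 1 and let γ ∈ ℝ. The discrete fractional integral operator I_{k,λ+iγ} is bounded from ℓ¹(ℤ) into ℓ^{p}(ℤ), i.e., there exists a constant C ≥ 0 such that ‖I_{k,λ+iγ} f‖_{ℓ^{p}(ℤ)} ≤ C · ‖f‖_{ℓ¹(ℤ)} for every f ∈ ℓ¹(ℤ), if and only if λ > 1/p. -/

import Mathlib

/-!
The operator is convolution with the kernel `K` that equals `m^{-(λ+iγ)}` at `m^k` (`m ≥ 1`) and
vanishes elsewhere, and convolution with `K` maps `ℓ¹` into `ℓ^p` exactly when `K ∈ ℓ^p`. Since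
`|m^{-(λ+iγ)}| = m^{-λ}`, the `p`-th power of the `ℓ^p` norm of `K` is `∑ m^{-λp}`, which is finite
exactly when `λp > 1`; this is `tsum_kernel_rpow_ne_top_iff`.

* If `K ∈ ℓ^p`, then Jensen's inequality with weights `|f (n - m^k)|`, of total mass at most
  `‖f‖₁` because `m ↦ m^k` is injective, gives
  `|I f (n)|^p ≤ ‖f‖₁^{p-1} ∑_m |f (n - m^k)| m^{-λp}`. Summing over `n` and exchanging the sums
  yields `‖I f‖_p^p ≤ ‖f‖₁^p ‖K‖_p^p`.
* Conversely, the image of the unit mass at `0` is `K`, so boundedness forces `K ∈ ℓ^p`.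
-/

open MeasureTheory ENNReal NNReal

/-- The `ℓ^p` norm of `f`: `(Σ_m |f m|^p)^{1/p}`. -/
noncomputable def lpNorm {α : Type*} {E : Type*} [NormedAddCommGroup E] (f : α → E) (p : ℝ) :
    ℝ≥0∞ :=
  (∑' m, (‖f m‖₊ : ℝ≥0∞) ^ p) ^ (1 / p)

/-- The `ℓ¹` norm of `f`. -/
noncomputable def l1Norm {α : Type*} {E : Type*} [NormedAddCommGroup E] (f : α → E) : ℝ≥0∞ :=
  ∑' m, (‖f m‖₊ : ℝ≥0∞)

/-- The discrete fractional integral operator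
`I_{k,λ+iγ} f (n) = Σ_{m=1}^∞ f (n - m^k) / m^{λ+iγ}`. -/
noncomputable def fracInt (k : ℕ) (lam γ : ℝ) (f : ℤ → ℂ) : ℤ → ℂ :=
  fun n => ∑' m : ℕ+, f (n - (m : ℤ) ^ k) / ((m : ℕ) : ℂ) ^ ((lam : ℂ) + γ * Complex.I)

/-- The size `|m^{-(λ+iγ)}|` of the convolution kernel at the `k`-th power `m^k`. -/
noncomputable def kernelSize (lam γ : ℝ) (m : ℕ+) : ℝ≥0∞ :=
  ‖(1 : ℂ) / ((m : ℕ) : ℂ) ^ ((lam : ℂ) + γ * Complex.I)‖ₑ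

lemma tsum_kernel_rpow_ne_top_iff {p : ℝ} (hp : 0 ≤ p) (lam γ : ℝ) :
    ∑' m : ℕ+, kernelSize lam γ m ^ p ≠ ∞ ↔ 1 < lam * p := by
  simp only [kernelSize, enorm_eq_nnnorm, ← ENNReal.coe_rpow_of_nonneg _ hp]
  rw [ENNReal.tsum_coe_ne_top_iff_summable, ← NNReal.summable_coe, ← Real.summable_nat_rpow_inv,
    ← summable_pnat_iff_summable_nat]
  refine summable_congr fun m => ?_
  have hm : (0 : ℝ) ≤ ((m : ℕ) : ℝ) := Nat.cast_nonneg _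
  rw [NNReal.coe_rpow, coe_nnnorm, norm_div, Complex.norm_natCast_cpow_of_pos m.pos]
  simp [Real.inv_rpow (Real.rpow_nonneg hm _), Real.rpow_mul hm]

/-- Jensen's inequality for `x ↦ x ^ p` and the (not normalised) weights `a`. -/
lemma tsum_mul_rpow_le {ι : Type*} {p : ℝ} (hp : 1 < p) (a w : ι → ℝ≥0∞) :
    (∑' i, a i * w i) ^ p ≤ (∑' i, a i) ^ (p - 1) * ∑' i, a i * w i ^ p := by
  have hp0 : 0 < p := zero_lt_one.trans hp
  have hp1 : p⁻¹ ≤ 1 := inv_le_one_of_one_le₀ hp.le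
  have key : ∑' i, a i * w i ≤ (∑' i, a i) ^ (1 - p⁻¹) * (∑' i, a i * w i ^ p) ^ p⁻¹ := by
    rw [ENNReal.tsum_eq_iSup_sum]
    refine iSup_le fun s => (ENNReal.inner_le_weight_mul_Lp_of_nonneg s hp.le a w).trans ?_
    exact mul_le_mul'
      (ENNReal.rpow_le_rpow (ENNReal.sum_le_tsum s) (sub_nonneg.2 hp1))
      (ENNReal.rpow_le_rpow (ENNReal.sum_le_tsum s) (inv_nonneg.2 hp0.le))
  refine (ENNReal.rpow_le_rpow key hp0.le).trans_eq ?_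
  rw [ENNReal.mul_rpow_of_nonneg _ _ hp0.le, ← ENNReal.rpow_mul, ← ENNReal.rpow_mul,
    inv_mul_cancel₀ hp0.ne', ENNReal.rpow_one, sub_mul, one_mul, inv_mul_cancel₀ hp0.ne']

lemma pnat_pow_injective {k : ℕ} (hk : 1 ≤ k) :
    Function.Injective fun m : ℕ+ => (m : ℤ) ^ k := by
  intro a b h
  have h' : ((a : ℕ) ^ k) = (b : ℕ) ^ k := by
    have h2 : ((a : ℕ) : ℤ) ^ k = ((b : ℕ) : ℤ) ^ k := h
    exact_mod_cast h2
  exact PNat.coe_injective (Nat.pow_left_injective (Nat.one_le_iff_ne_zero.1 hk) h')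

lemma enorm_fracInt_le (k : ℕ) (lam γ : ℝ) (f : ℤ → ℂ) (n : ℤ) :
    ‖fracInt k lam γ f n‖ₑ ≤ ∑' m : ℕ+, ‖f (n - (m : ℤ) ^ k)‖ₑ * kernelSize lam γ m := by
  refine enorm_tsum_le_tsum_enorm.trans_eq (tsum_congr fun m => ?_)
  rw [kernelSize, ← enorm_mul, mul_one_div]

/-- Young's inequality `‖K * f‖_p^p ≤ ‖f‖₁^p ‖K‖_p^p` for the kernel of `fracInt`. -/
lemma tsum_enorm_fracInt_rpow_le {p : ℝ} (hp : 1 < p) {k : ℕ} (hk : 1 ≤ k) (lam γ : ℝ)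
    (f : ℤ → ℂ) :
    ∑' n, ‖fracInt k lam γ f n‖ₑ ^ p ≤ l1Norm f ^ p * ∑' m : ℕ+, kernelSize lam γ m ^ p := by
  have hp0 : 0 < p := zero_lt_one.trans hp
  have hmass (n : ℤ) : ∑' m : ℕ+, ‖f (n - (m : ℤ) ^ k)‖ₑ ≤ l1Norm f :=
    ENNReal.tsum_comp_le_tsum_of_injective
      (sub_right_injective.comp (pnat_pow_injective hk)) (fun j => ‖f j‖ₑ)
  have hshift (m : ℕ+) : ∑' n : ℤ, ‖f (n - (m : ℤ) ^ k)‖ₑ = l1Norm f :=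
    (Equiv.subRight ((m : ℤ) ^ k)).tsum_eq (fun j => ‖f j‖ₑ)
  calc ∑' n, ‖fracInt k lam γ f n‖ₑ ^ p
      ≤ ∑' n, l1Norm f ^ (p - 1) *
          ∑' m : ℕ+, ‖f (n - (m : ℤ) ^ k)‖ₑ * kernelSize lam γ m ^ p := by
        refine ENNReal.tsum_le_tsum fun n => ?_
        refine (ENNReal.rpow_le_rpow (enorm_fracInt_le k lam γ f n) hp0.le).trans ?_
        refine (tsum_mul_rpow_le hp _ _).trans ?_
        exact mul_le_mul' (ENNReal.rpow_le_rpow (hmass n) (sub_nonneg.2 hp.le)) le_rfl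
    _ = l1Norm f ^ (p - 1) * (l1Norm f * ∑' m : ℕ+, kernelSize lam γ m ^ p) := by
        rw [ENNReal.tsum_mul_left, ENNReal.tsum_comm]
        simp_rw [ENNReal.tsum_mul_right, hshift, ENNReal.tsum_mul_left]
    _ = l1Norm f ^ p * ∑' m : ℕ+, kernelSize lam γ m ^ p := by
        rw [← mul_assoc]
        congr 1
        nth_rewrite 2 [← ENNReal.rpow_one (l1Norm f)]
        rw [← ENNReal.rpow_add_of_nonneg _ _ (sub_nonneg.2 hp.le) zero_le_one, sub_add_cancel]

lemma enorm_fracInt_single {k : ℕ} (hk : 1 ≤ k) (lam γ : ℝ) (m : ℕ+) :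
    ‖fracInt k lam γ (Pi.single 0 1) ((m : ℤ) ^ k)‖ₑ = kernelSize lam γ m := by
  rw [fracInt, tsum_eq_single m, sub_self, Pi.single_eq_same, kernelSize]
  intro j hj
  have hne : (m : ℤ) ^ k - (j : ℤ) ^ k ≠ 0 :=
    sub_ne_zero.2 fun h => hj (pnat_pow_injective hk h).symm
  rw [Pi.single_eq_of_ne hne, zero_div]

/-- For `1 < p < ∞`, `k ≥ 1`, `0 < λ ≤ 1`, `γ ∈ ℝ`, the discrete fractional integral
operator `I_{k,λ+iγ}` is bounded from `ℓ¹(ℤ)` into `ℓ^p(ℤ)` if and only if `λ > 1/p`. -/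
theorem fracInt_strong_type_iff (p : ℝ) (hp : 1 < p) (k : ℕ) (hk : 1 ≤ k)
    (lam : ℝ) (hlam0 : 0 < lam) (hlam1 : lam ≤ 1) (γ : ℝ) :
    (∃ C : ℝ, 0 ≤ C ∧ ∀ f : ℤ → ℂ, Summable (fun m => ‖f m‖) →
      lpNorm (fracInt k lam γ f) p ≤ ENNReal.ofReal C * l1Norm f) ↔ 1 / p < lam := by
  have hp0 : 0 < p := zero_lt_one.trans hp
  rw [div_lt_iff₀ hp0, ← tsum_kernel_rpow_ne_top_iff hp0.le lam γ]
  constructor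
  · rintro ⟨C, -, hC⟩
    have hsum : Summable fun n : ℤ => ‖(Pi.single 0 1 : ℤ → ℂ) n‖ :=
      summable_of_ne_finset_zero (s := {0}) fun n hn => by
        rw [Pi.single_eq_of_ne (by simpa using hn), norm_zero]
    have hl1 : l1Norm (Pi.single 0 1 : ℤ → ℂ) = 1 := by
      rw [l1Norm, tsum_eq_single 0 fun n hn => by simp [Pi.single_eq_of_ne hn]]
      simp
    have hbound := hC _ hsum
    rw [hl1, mul_one] at hbound
    have hfin : lpNorm (fracInt k lam γ (Pi.single 0 1)) p ≠ ∞ :=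
      ne_top_of_le_ne_top ENNReal.ofReal_ne_top hbound
    have hfin' : ∑' n, ‖fracInt k lam γ (Pi.single 0 1) n‖ₑ ^ p ≠ ∞ := fun h =>
      hfin ((congrArg (· ^ (1 / p)) h).trans (ENNReal.top_rpow_of_pos (one_div_pos.2 hp0)))
    refine ne_top_of_le_ne_top hfin' ?_
    simp_rw [← enorm_fracInt_single hk lam γ]
    exact ENNReal.tsum_comp_le_tsum_of_injective (pnat_pow_injective hk)
      (fun n => ‖fracInt k lam γ (Pi.single 0 1) n‖ₑ ^ p)
  · intro hK
    refine ⟨((∑' m : ℕ+, kernelSize lam γ m ^ p) ^ (1 / p)).toReal, ENNReal.toReal_nonneg,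
      fun f _ => ?_⟩
    rw [ENNReal.ofReal_toReal (ENNReal.rpow_ne_top_of_nonneg (one_div_nonneg.2 hp0.le) hK)]
    refine (ENNReal.rpow_le_rpow (tsum_enorm_fracInt_rpow_le hp hk lam γ f)
      (one_div_nonneg.2 hp0.le)).trans_eq ?_
    rw [ENNReal.mul_rpow_of_nonneg _ _ (one_div_nonneg.2 hp0.le), ← ENNReal.rpow_mul,
      mul_one_div_cancel hp0.ne', ENNReal.rpow_one, mul_comm]
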